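/- Let φ : ℝ → ℝ be convex and non-increasing (antitone), and let H and H' be finite nonempty sets of functions from a set X to ℝ such that the convex hull of H' is contained in the convex hull of H. Then for every x ∈ X, every pair h, h' in the convex hull of H', and every y ∈ {−1, +1}, |φ(y·h(x)) − φ(y·h'(x))| ≤ max_{h₁, h₂ ∈ H} max_{y ∈ {−1,+1}} |φ(y·h₁(x)) − φ(y·h₂(x))|. -/

import Mathlib

/-- Two values of an antitone function on an interval differ by at most its values at the ends. -/
lemma Antitone.abs_sub_le_abs_sub {φ : ℝ → ℝ} (hφ : Antitone φ) {a b s t : ℝ}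
    (hs : s ∈ Set.Icc a b) (ht : t ∈ Set.Icc a b) : |φ s - φ t| ≤ |φ a - φ b| := by
  refine le_trans ?_ (le_abs_self _)
  rw [abs_sub_le_iff]
  constructor <;> linarith [hφ hs.1, hφ hs.2, hφ ht.1, hφ ht.2]

/-- Evaluation at a point maps a convex hull into any interval containing the values of the
generating set. -/
lemma eval_mem_Icc_of_mem_convexHull {X : Type*} {S : Set (X → ℝ)} {x : X} {a b : ℝ}
    (hS : ∀ g ∈ S, g x ∈ Set.Icc a b) {h : X → ℝ} (hh : h ∈ convexHull ℝ S) :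
    h x ∈ Set.Icc a b :=
  convexHull_min hS
    ((convex_Icc a b).linear_preimage (LinearMap.proj x : (X → ℝ) →ₗ[ℝ] ℝ)) hh

/-- key step of Lemma A.5 via Lemma 5.1: for a convex, non-increasing `φ`,
and finite nonempty sets `H`, `H'` of hypotheses with `convexHull H' ⊆ convexHull H`, every
pointwise margin-loss disagreement between hypotheses in the convex hull of `H'` (over labels
`y ∈ {-1, 1}`) is bounded by the maximum pairwise disagreement over `H`. -/
theorem convexHull_pairwise_disagreement_le_max
    {X : Type*} (φ : ℝ → ℝ) (hconv : ConvexOn ℝ Set.univ φ) (hanti : Antitone φ)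
    (H H' : Finset (X → ℝ)) (hne : H.Nonempty) (hne' : H'.Nonempty)
    (hsub : convexHull ℝ (↑H' : Set (X → ℝ)) ⊆ convexHull ℝ (↑H : Set (X → ℝ))) :
    ∀ x : X, ∀ h ∈ convexHull ℝ (↑H' : Set (X → ℝ)), ∀ h' ∈ convexHull ℝ (↑H' : Set (X → ℝ)),
      ∀ y ∈ ({-1, 1} : Set ℝ),
        |φ (y * h x) - φ (y * h' x)| ≤
          (H ×ˢ H).sup' (hne.product hne) fun hh =>
            ({-1, 1} : Finset ℝ).sup' ⟨-1, by simp⟩ fun y' =>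
              |φ (y' * hh.1 x) - φ (y' * hh.2 x)| := by
  intro x h hh h' hh' y hy
  obtain ⟨l, hl, hlmin⟩ := H.exists_min_image (fun g => g x) hne
  obtain ⟨u, hu, humax⟩ := H.exists_max_image (fun g => g x) hne
  have hbound : ∀ g ∈ (↑H : Set (X → ℝ)), g x ∈ Set.Icc (l x) (u x) :=
    fun g hg => ⟨hlmin g hg, humax g hg⟩
  have hs := eval_mem_Icc_of_mem_convexHull hbound (hsub hh)
  have ht := eval_mem_Icc_of_mem_convexHull hbound (hsub hh')
  have hends : |φ (y * h x) - φ (y * h' x)| ≤ |φ (y * l x) - φ (y * u x)| := by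
    rcases hy with rfl | rfl
    · rw [abs_sub_comm (φ (-1 * l x))]
      apply hanti.abs_sub_le_abs_sub <;> constructor <;> linarith [hs.1, hs.2, ht.1, ht.2]
    · simpa only [one_mul] using hanti.abs_sub_le_abs_sub hs ht
  have hy' : y ∈ ({-1, 1} : Finset ℝ) := by simpa using hy
  refine hends.trans ?_
  refine le_trans ?_ (Finset.le_sup' _ (Finset.mk_mem_product hl hu))
  exact Finset.le_sup' (fun y' => |φ (y' * l x) - φ (y' * u x)|) hy'
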